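/- arXiv:1002.2001 — 5 statements merged into one kernel-verified Lean document; each statement's English description precedes it below -/
import Mathlib

section
/- Let χ > 1 and set μ := √(2/(χ + 1)). Then ∫_{-π}^{π} (8(χ − cos t))^{-1/2} dt = μ ∫_0^{π/2} (1 − μ² sin² θ)^{-1/2} dθ. -/
/-!
The integrand `f t = 1 / √(8 (χ - cos t))` is even, so its integral over `[-π, π]` is twice the
integral over `[0, π]`. The substitution `t = π - 2 θ` maps `[0, π / 2]` to `[0, π]`, and since
`χ - cos (π - 2 θ) = (χ + 1) - 2 sin² θ = (χ + 1) (1 - μ² sin² θ)` with `8 (χ + 1) = (4 / μ)²`,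
the transformed integrand is a quarter of `μ / √(1 - μ² sin² θ)`.
-/

open MeasureTheory intervalIntegral

/-- Base case of the Legendre recursion:
`Q_{−1/2}(χ) = ∫_{-π}^{π} (8(χ − cos t))^{−1/2} dt = μ K(μ)` where `μ = √(2/(χ+1))`
and `K` is the complete elliptic integral of the first kind. -/
theorem legendre_Q_neg_half_elliptic (χ : ℝ) (hχ : 1 < χ)
    (μ : ℝ) (hμ : μ = Real.sqrt (2 / (χ + 1))) :
    (∫ t in (-Real.pi)..Real.pi, 1 / Real.sqrt (8 * (χ - Real.cos t)))
      = μ * ∫ θ in (0:ℝ)..(Real.pi / 2), 1 / Real.sqrt (1 - μ ^ 2 * Real.sin θ ^ 2) := by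
  have hχ1 : 0 < χ + 1 := by linarith
  have hμ0 : 0 < μ := by rw [hμ]; positivity
  have hμ2 : μ ^ 2 * (χ + 1) = 2 := by
    rw [hμ, Real.sq_sqrt (by positivity)]
    field_simp
  set f : ℝ → ℝ := fun t => 1 / Real.sqrt (8 * (χ - Real.cos t)) with hf
  have hpos (t : ℝ) : 0 < 8 * (χ - Real.cos t) := by
    linarith [Real.cos_le_one t]
  have hcont : Continuous f :=
    continuous_const.div (by fun_prop) fun t => (Real.sqrt_pos.2 (hpos t)).ne'
  have hpt (θ : ℝ) :
      μ * (1 / Real.sqrt (1 - μ ^ 2 * Real.sin θ ^ 2)) = 4 * f (Real.pi - 2 * θ) := by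
    have h : 8 * (χ - Real.cos (Real.pi - 2 * θ))
        = (4 / μ) ^ 2 * (1 - μ ^ 2 * Real.sin θ ^ 2) := by
      rw [Real.cos_pi_sub, Real.cos_two_mul, Real.cos_sq']
      field_simp
      linear_combination 8 * hμ2
    simp only [hf]
    rw [h, Real.sqrt_mul (by positivity), Real.sqrt_sq (by positivity)]
    field_simp
  have heven : ∫ t in (-Real.pi)..0, f t = ∫ t in (0 : ℝ)..Real.pi, f t := by
    have h := intervalIntegral.integral_comp_neg (a := 0) (b := Real.pi) f
    simpa [hf] using h.symm
  have hsub : ∫ θ in (0 : ℝ)..(Real.pi / 2), f (Real.pi - 2 * θ)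
      = 2⁻¹ * ∫ t in (0 : ℝ)..Real.pi, f t := by
    rw [intervalIntegral.integral_comp_sub_mul f two_ne_zero Real.pi, smul_eq_mul]
    congr 2 <;> ring
  rw [← integral_add_adjacent_intervals (hcont.intervalIntegrable (-Real.pi) 0)
    (hcont.intervalIntegrable 0 Real.pi), heven, ← intervalIntegral.integral_const_mul]
  simp_rw [hpt]
  rw [intervalIntegral.integral_const_mul, hsub]
  ring
end

section
/- Let χ > 1 and set μ := √(2/(χ + 1)). Then ∫_{-π}^{π} cos t · (8(χ − cos t))^{-1/2} dt = χ μ ∫_0^{π/2} (1 − μ² sin² θ)^{-1/2} dθ − √(2(χ + 1)) ∫_0^{π/2} (1 − μ² sin² θ)^{1/2} dθ. -/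
open MeasureTheory intervalIntegral

/-!
The integrand is even in `t`, so the left-hand side is twice the integral over `[0, π]`. Substitute
`t = π - 2θ` and put `Δ = √(1 - μ² sin² θ)`. Since `μ² (χ + 1) = 2`, this gives
`χ - cos t = (χ + 1) Δ²` and hence `cos t = χ - (χ + 1) Δ²`, so the integrand becomes
`(μ / 4) (χ / Δ - (χ + 1) Δ)`. Integrating over `[0, π / 2]` yields the two elliptic integrals.
-/

/-- Second base case of the Legendre recursion:
`Q_{1/2}(χ) = ∫_{-π}^{π} cos t · (8(χ − cos t))^{−1/2} dt = χ μ K(μ) − √(2(χ+1)) E(μ)`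
where `μ = √(2/(χ+1))` and `K`, `E` are the complete elliptic integrals of the first
and second kinds. -/
theorem legendre_Q_half_elliptic (χ : ℝ) (hχ : 1 < χ)
    (μ : ℝ) (hμ : μ = Real.sqrt (2 / (χ + 1))) :
    (∫ t in (-Real.pi)..Real.pi, Real.cos t / Real.sqrt (8 * (χ - Real.cos t)))
      = χ * μ * (∫ θ in (0:ℝ)..(Real.pi / 2), 1 / Real.sqrt (1 - μ ^ 2 * Real.sin θ ^ 2))
        - Real.sqrt (2 * (χ + 1)) *
            ∫ θ in (0:ℝ)..(Real.pi / 2), Real.sqrt (1 - μ ^ 2 * Real.sin θ ^ 2) := by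
  have hc : 0 < χ + 1 := by linarith
  have hμpos : 0 < μ := by rw [hμ]; positivity
  have hμsq : μ ^ 2 * (χ + 1) = 2 := by
    rw [hμ, Real.sq_sqrt (by positivity)]; field_simp
  have hμlt : μ ^ 2 < 1 := by nlinarith
  have hrad : ∀ θ : ℝ, 0 < 1 - μ ^ 2 * Real.sin θ ^ 2 := fun θ => by
    nlinarith [Real.sin_sq_le_one θ, sq_nonneg μ]
  have hsqrt : Real.sqrt (2 * (χ + 1)) = μ * (χ + 1) := by
    rw [Real.sqrt_eq_iff_mul_self_eq (by positivity) (by positivity)]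
    linear_combination -(χ + 1) * hμsq
  set f : ℝ → ℝ := fun t => Real.cos t / Real.sqrt (8 * (χ - Real.cos t)) with hf
  have hfcont : Continuous f := by
    refine Real.continuous_cos.div (by fun_prop) fun t => ?_
    have : 0 < χ - Real.cos t := by linarith [Real.cos_le_one t]
    positivity
  have heven : ∫ t in (-Real.pi)..Real.pi, f t = 2 * ∫ t in (0:ℝ)..Real.pi, f t := by
    have h := intervalIntegral.integral_comp_neg (a := 0) (b := Real.pi) f
    have hneg : ∀ t, f (-t) = f t := fun t => by simp [hf]
    simp only [hneg, neg_zero] at h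
    rw [← integral_add_adjacent_intervals (hfcont.intervalIntegrable (-Real.pi) 0)
      (hfcont.intervalIntegrable 0 Real.pi), ← h]
    ring
  have hsubst : ∫ t in (0:ℝ)..Real.pi, f t
      = 2 * ∫ θ in (0:ℝ)..(Real.pi / 2), f (Real.pi - 2 * θ) := by
    rw [intervalIntegral.integral_comp_sub_mul f two_ne_zero]
    have h1 : Real.pi - 2 * (Real.pi / 2) = 0 := by ring
    simp [h1]
  have hpt : ∀ θ, f (Real.pi - 2 * θ)
      = μ * χ / 4 * (1 / Real.sqrt (1 - μ ^ 2 * Real.sin θ ^ 2))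
        - μ * (χ + 1) / 4 * Real.sqrt (1 - μ ^ 2 * Real.sin θ ^ 2) := fun θ => by
    set Δ := Real.sqrt (1 - μ ^ 2 * Real.sin θ ^ 2) with hΔ
    have hΔpos : 0 < Δ := Real.sqrt_pos.mpr (hrad θ)
    have hΔsq : Δ ^ 2 = 1 - μ ^ 2 * Real.sin θ ^ 2 := Real.sq_sqrt (hrad θ).le
    have hcos : Real.cos (Real.pi - 2 * θ) = χ - (χ + 1) * Δ ^ 2 := by
      rw [Real.cos_pi_sub, Real.cos_two_mul, Real.cos_sq', hΔsq]
      linear_combination (-Real.sin θ ^ 2) * hμsq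
    have hden : Real.sqrt (8 * (χ - Real.cos (Real.pi - 2 * θ))) = 2 * μ * (χ + 1) * Δ := by
      rw [hcos, Real.sqrt_eq_iff_mul_self_eq (by ring_nf; positivity) (by positivity)]
      linear_combination (-4 * (χ + 1) * Δ ^ 2) * hμsq
    simp only [hf]
    rw [hden, hcos]
    field_simp
    linear_combination (-2 * (χ - (χ + 1) * Δ ^ 2)) * hμsq
  have hcontE : Continuous fun θ : ℝ => Real.sqrt (1 - μ ^ 2 * Real.sin θ ^ 2) := by fun_prop
  have hcontK : Continuous fun θ : ℝ => 1 / Real.sqrt (1 - μ ^ 2 * Real.sin θ ^ 2) :=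
    continuous_const.div hcontE fun θ => (Real.sqrt_pos.mpr (hrad θ)).ne'
  rw [heven, hsubst]
  simp only [hpt]
  rw [integral_sub ((hcontK.const_mul _).intervalIntegrable _ _)
      ((hcontE.const_mul _).intervalIntegrable _ _),
    intervalIntegral.integral_const_mul, intervalIntegral.integral_const_mul, hsqrt]
  ring
end

section
/- Let χ > 1 and for n ∈ ℕ define I_n(χ) := ∫_{-π}^{π} cos(n t) (χ − cos t)^{-1/2} dt. Then for every integer n ≥ 2, I_n(χ) = (4(n−1)/(2n−1)) χ I_{n−1}(χ) − ((2n−3)/(2n−1)) I_{n−2}(χ). -/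
open MeasureTheory intervalIntegral

/-!
With `m = n - 1`, the function `sin (m t) * √(χ - cos t)` vanishes at `t = ±π`, so its derivative
integrates to zero over `[-π, π]`. Product-to-sum formulas turn that derivative into the combination
`(m χ cos (m t) - (m/2 + 1/4) cos ((m+1) t) - (m/2 - 1/4) cos ((m-1) t)) / √(χ - cos t)`,
whose integral is the recursion multiplied by `-(2 n - 1) / 4`.
-/

/-- The derivative of `sin (m t) * √(χ - cos t)`, expanded by product-to-sum formulas into the three
integrands of the recursion (here `m = k + 1`). -/
lemma hasDerivAt_sin_mul_sqrt (χ : ℝ) (hχ : 1 < χ) (k : ℕ) (t : ℝ) :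
    HasDerivAt (fun t : ℝ => Real.sin (((k + 1 : ℕ) : ℝ) * t) * Real.sqrt (χ - Real.cos t))
      (((k : ℝ) + 1) * χ * (Real.cos (((k + 1 : ℕ) : ℝ) * t) / Real.sqrt (χ - Real.cos t))
        - (((k : ℝ) + 1) / 2 + 1 / 4) *
          (Real.cos (((k + 2 : ℕ) : ℝ) * t) / Real.sqrt (χ - Real.cos t))
        - (((k : ℝ) + 1) / 2 - 1 / 4) *
          (Real.cos ((k : ℝ) * t) / Real.sqrt (χ - Real.cos t))) t := by
  have hpos : 0 < χ - Real.cos t := by linarith [Real.cos_le_one t]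
  have hs : Real.sqrt (χ - Real.cos t) ≠ 0 := (Real.sqrt_pos.mpr hpos).ne'
  have hsq := Real.sq_sqrt hpos.le
  have h1 : HasDerivAt (fun t : ℝ => Real.sin (((k + 1 : ℕ) : ℝ) * t))
      (Real.cos (((k + 1 : ℕ) : ℝ) * t) * ((k + 1 : ℕ) : ℝ)) t := by
    simpa using ((hasDerivAt_id t).const_mul ((k + 1 : ℕ) : ℝ)).sin
  have h2 : HasDerivAt (fun t : ℝ => Real.sqrt (χ - Real.cos t))
      (Real.sin t / (2 * Real.sqrt (χ - Real.cos t))) t := by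
    simpa using ((Real.hasDerivAt_cos t).const_sub χ).sqrt hpos.ne'
  have e2 : Real.cos (((k + 2 : ℕ) : ℝ) * t) =
      Real.cos (((k + 1 : ℕ) : ℝ) * t) * Real.cos t
        - Real.sin (((k + 1 : ℕ) : ℝ) * t) * Real.sin t := by
    rw [← Real.cos_add]; congr 1; push_cast; ring
  have e0 : Real.cos ((k : ℝ) * t) =
      Real.cos (((k + 1 : ℕ) : ℝ) * t) * Real.cos t
        + Real.sin (((k + 1 : ℕ) : ℝ) * t) * Real.sin t := by
    rw [← Real.cos_sub]; congr 1; push_cast; ring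
  refine (h1.mul h2).congr_deriv ?_
  rw [e2, e0]
  generalize Real.cos (((k + 1 : ℕ) : ℝ) * t) = c
  generalize Real.sin (((k + 1 : ℕ) : ℝ) * t) = d
  push_cast
  generalize Real.sqrt (χ - Real.cos t) = s at *
  field_simp
  rw [hsq]
  ring

/-- Three-term recursion for the integral representation of the half-integer degree
Legendre functions of the second kind: with
`I_n(χ) = ∫_{-π}^{π} cos(nt) (χ − cos t)^{−1/2} dt` and `χ > 1`, for `n ≥ 2` one has
`I_n = (4(n−1)/(2n−1)) χ I_{n−1} − ((2n−3)/(2n−1)) I_{n−2}`. -/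
theorem legendre_Q_recursion (χ : ℝ) (hχ : 1 < χ)
    (I : ℕ → ℝ → ℝ)
    (hI : ∀ (n : ℕ) (x : ℝ),
      I n x = ∫ t in (-Real.pi)..Real.pi, Real.cos (n * t) / Real.sqrt (x - Real.cos t)) :
    ∀ n : ℕ, 2 ≤ n →
      I n χ = (4 * ((n : ℝ) - 1) / (2 * (n : ℝ) - 1)) * χ * I (n - 1) χ
            - ((2 * (n : ℝ) - 3) / (2 * (n : ℝ) - 1)) * I (n - 2) χ := by
  intro n hn
  obtain ⟨k, rfl⟩ := Nat.exists_eq_add_of_le' hn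
  have hcont : ∀ m : ℕ, Continuous
      (fun t : ℝ => Real.cos ((m : ℝ) * t) / Real.sqrt (χ - Real.cos t)) := fun m =>
    Continuous.div (by fun_prop) (by fun_prop) fun t =>
      (Real.sqrt_pos.mpr (by linarith [Real.cos_le_one t])).ne'
  have hint : ∀ m : ℕ, IntervalIntegrable
      (fun t : ℝ => Real.cos ((m : ℝ) * t) / Real.sqrt (χ - Real.cos t))
      volume (-Real.pi) Real.pi := fun m => (hcont m).intervalIntegrable _ _
  have i1 := (hint (k + 1)).const_mul (((k : ℝ) + 1) * χ)
  have i2 := (hint (k + 2)).const_mul (((k : ℝ) + 1) / 2 + 1 / 4)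
  have i0 := (hint k).const_mul (((k : ℝ) + 1) / 2 - 1 / 4)
  have key := integral_eq_sub_of_hasDerivAt
    (fun t _ => hasDerivAt_sin_mul_sqrt χ hχ k t) ((i1.sub i2).sub i0)
  rw [integral_sub (i1.sub i2) i0, integral_sub i1 i2, intervalIntegral.integral_const_mul,
    intervalIntegral.integral_const_mul, intervalIntegral.integral_const_mul,
    ← hI, ← hI, ← hI, mul_neg, Real.sin_neg, Real.sin_nat_mul_pi] at key
  have hk : (2 * ((k : ℝ) + 2) - 1) ≠ 0 := by
    have : (0 : ℝ) ≤ k := k.cast_nonneg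
    linarith
  rw [show k + 2 - 1 = k + 1 by omega, show k + 2 - 2 = k by omega]
  push_cast
  field_simp
  linarith
end

section
/- For n ∈ ℕ define I_n(x) := ∫_{-π}^{π} cos(n t) (x − cos t)^{-1/2} dt for x > 1. Then for every integer n ≥ 1 and every χ > 1, the function I_n is differentiable at χ with derivative I_n'(χ) = ((2n−1)/(2(χ² − 1))) · (χ I_n(χ) − I_{n−1}(χ)). -/
open MeasureTheory intervalIntegral

/-!
Write `D = x - cos t`, which is at least `x - 1 > 0`. Differentiation under the integral sign is
justified by domination (`D` is bounded below uniformly for `x` near `χ`) and gives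
`I_n'(χ) = ∫ -cos(nt) / (2 D^{3/2}) dt`. The identity then holds because the integrands of the two
sides differ by a multiple of a total derivative: with `g(t) = (sin((n-1)t) - χ sin(nt)) / √D`,
`-cos(nt) / (2 D^{3/2})
  = ((2n-1) / (2(χ²-1))) (χ cos(nt) - cos((n-1)t)) / √D + g'(t) / (χ²-1)`,
and `g` vanishes at `±π`. The function `g` is found by comparing powers of `χ`; the verification uses
only the addition formulas, with `n = k + 1`.
-/

namespace LegendreQ

lemma sub_cos_pos {x : ℝ} (hx : 1 < x) (t : ℝ) : 0 < x - Real.cos t := by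
  linarith [Real.cos_le_one t]

/-- The `x`-derivative of the integrand defining `I_n`. -/
lemma hasDerivAt_integrand (a t : ℝ) {x : ℝ} (hx : 1 < x) :
    HasDerivAt (fun x => a / Real.sqrt (x - Real.cos t))
      (-a / (2 * ((x - Real.cos t) * Real.sqrt (x - Real.cos t)))) x := by
  have hD := sub_cos_pos hx t
  have hs := Real.sqrt_pos.2 hD
  have h := (hasDerivAt_const x a).div
    (((hasDerivAt_id x).sub_const (Real.cos t)).sqrt hD.ne') hs.ne'
  refine h.congr_deriv ?_
  simp only [id]
  rw [Real.sq_sqrt hD.le]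
  field_simp
  ring

lemma continuous_integrand {f : ℝ → ℝ} (hf : Continuous f) {x : ℝ} (hx : 1 < x) :
    Continuous (fun t => f t / Real.sqrt (x - Real.cos t)) :=
  hf.div (by fun_prop) fun t => (Real.sqrt_pos.2 (sub_cos_pos hx t)).ne'

lemma continuous_integrand_deriv {f : ℝ → ℝ} (hf : Continuous f) {x : ℝ} (hx : 1 < x) :
    Continuous (fun t => -f t / (2 * ((x - Real.cos t) * Real.sqrt (x - Real.cos t)))) :=
  hf.neg.div (by fun_prop) fun t => by
    have hD := sub_cos_pos hx t
    have hs := Real.sqrt_pos.2 hD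
    positivity

lemma hasDerivAt_integral (a : ℝ) {χ : ℝ} (hχ : 1 < χ) :
    HasDerivAt (fun x => ∫ t in (-Real.pi)..Real.pi, Real.cos (a * t) / Real.sqrt (x - Real.cos t))
      (∫ t in (-Real.pi)..Real.pi,
        -Real.cos (a * t) / (2 * ((χ - Real.cos t) * Real.sqrt (χ - Real.cos t)))) χ := by
  have hc : Continuous fun t : ℝ => Real.cos (a * t) := by fun_prop
  have hd : 0 < (χ - 1) / 2 := by linarith
  have hs := Real.sqrt_pos.2 hd
  have hmem : Set.Ioi ((1 + χ) / 2) ∈ nhds χ := Ioi_mem_nhds (by linarith)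
  have hone : ∀ x ∈ Set.Ioi ((1 + χ) / 2), 1 < x := fun x hx => by
    have := Set.mem_Ioi.1 hx
    linarith
  refine (intervalIntegral.hasDerivAt_integral_of_dominated_loc_of_deriv_le
    (F := fun x t => Real.cos (a * t) / Real.sqrt (x - Real.cos t))
    (F' := fun x t =>
      -Real.cos (a * t) / (2 * ((x - Real.cos t) * Real.sqrt (x - Real.cos t))))
    (bound := fun _ => 1 / (2 * ((χ - 1) / 2 * Real.sqrt ((χ - 1) / 2))))
    hmem ?_ ?_ ?_ ?_ ?_ ?_).2
  · filter_upwards [hmem] with x hx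
    exact (continuous_integrand hc (hone x hx)).aestronglyMeasurable
  · exact (continuous_integrand hc hχ).intervalIntegrable _ _
  · exact (continuous_integrand_deriv hc hχ).aestronglyMeasurable
  · refine Filter.Eventually.of_forall fun t _ x hx => ?_
    have hD := sub_cos_pos (hone x hx) t
    have hle : (χ - 1) / 2 ≤ x - Real.cos t := by
      have := Set.mem_Ioi.1 hx
      linarith [Real.cos_le_one t]
    rw [Real.norm_eq_abs, abs_div, abs_neg,
      abs_of_nonneg (a := 2 * ((x - Real.cos t) * Real.sqrt (x - Real.cos t))) (by positivity)]
    gcongr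
    exact Real.abs_cos_le_one _
  · exact intervalIntegrable_const
  · exact Filter.Eventually.of_forall fun t _ x hx => hasDerivAt_integrand _ t (hone x hx)

/-- The pointwise identity: `g = (sin(kt) - χ sin((k+1)t)) / √(χ - cos t)` is a primitive of
`χ² - 1` times the difference of the two integrands. -/
lemma hasDerivAt_primitive (k t : ℝ) {χ : ℝ} (hχ : 1 < χ) :
    HasDerivAt
      (fun t => (Real.sin (k * t) - χ * Real.sin ((k + 1) * t)) / Real.sqrt (χ - Real.cos t))
      ((χ ^ 2 - 1) * (-Real.cos ((k + 1) * t) /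
          (2 * ((χ - Real.cos t) * Real.sqrt (χ - Real.cos t))))
        - (2 * k + 1) / 2 * (χ * (Real.cos ((k + 1) * t) / Real.sqrt (χ - Real.cos t))
          - Real.cos (k * t) / Real.sqrt (χ - Real.cos t))) t := by
  have hD := sub_cos_pos hχ t
  have hs := Real.sqrt_pos.2 hD
  have hsin (b : ℝ) : HasDerivAt (fun t => Real.sin (b * t)) (Real.cos (b * t) * b) t := by
    simpa using ((hasDerivAt_id t).const_mul b).sin
  have h := ((hsin k).sub ((hsin (k + 1)).const_mul χ)).div
    (((Real.hasDerivAt_cos t).const_sub χ).sqrt hD.ne') hs.ne'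
  refine h.congr_deriv ?_
  have hsq := Real.sq_sqrt hD.le
  have hadd : (k + 1) * t = k * t + t := by ring
  simp only [Pi.sub_apply, hadd, Real.cos_add, Real.sin_add]
  have hpy := Real.sin_sq_add_cos_sq t
  generalize Real.sqrt (χ - Real.cos t) = r at *
  generalize Real.cos (k * t) = C at *
  generalize Real.sin (k * t) = S at *
  generalize Real.sin t = s at *
  clear h hsin hD
  -- Eliminating `cos t = χ - r²` leaves a rational identity in `r`.
  have hc : Real.cos t = χ - r ^ 2 := by linarith
  rw [hc] at hpy ⊢
  have hr : χ - (χ - r ^ 2) = r ^ 2 := by ring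
  rw [hr]
  field_simp
  ring_nf
  linear_combination C * χ * hpy

end LegendreQ

/-- Derivative identity for the integral representation of the half-integer degree
Legendre functions of the second kind: with
`I_n(x) = ∫_{-π}^{π} cos(nt) (x − cos t)^{−1/2} dt`, for `n ≥ 1` and `χ > 1` the
function `I_n` is differentiable at `χ` with
`I_n'(χ) = ((2n−1)/(2(χ²−1))) (χ I_n(χ) − I_{n−1}(χ))`. -/
theorem legendre_Q_derivative
    (I : ℕ → ℝ → ℝ)
    (hI : ∀ (n : ℕ) (x : ℝ),
      I n x = ∫ t in (-Real.pi)..Real.pi, Real.cos (n * t) / Real.sqrt (x - Real.cos t)) :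
    ∀ n : ℕ, 1 ≤ n → ∀ χ : ℝ, 1 < χ →
      HasDerivAt (I n)
        ((2 * (n : ℝ) - 1) / (2 * (χ ^ 2 - 1)) * (χ * I n χ - I (n - 1) χ)) χ := by
  intro n hn χ hχ
  obtain ⟨k, rfl⟩ : ∃ k, n = k + 1 := ⟨n - 1, by omega⟩
  have hintg (b : ℝ) : IntervalIntegrable
      (fun t => Real.cos (b * t) / Real.sqrt (χ - Real.cos t)) volume (-Real.pi) Real.pi :=
    (LegendreQ.continuous_integrand (by fun_prop) hχ).intervalIntegrable _ _
  have hintg' : IntervalIntegrable (fun t => -Real.cos (((k : ℝ) + 1) * t) /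
      (2 * ((χ - Real.cos t) * Real.sqrt (χ - Real.cos t)))) volume (-Real.pi) Real.pi :=
    (LegendreQ.continuous_integrand_deriv (by fun_prop) hχ).intervalIntegrable _ _
  have hrhs := (((hintg ((k : ℝ) + 1)).const_mul χ).sub (hintg k)).const_mul ((2 * (k : ℝ) + 1) / 2)
  have hftc := integral_eq_sub_of_hasDerivAt
    (fun t _ => LegendreQ.hasDerivAt_primitive (k : ℝ) t hχ) ((hintg'.const_mul (χ ^ 2 - 1)).sub hrhs)
  have hsin : Real.sin (((k : ℝ) + 1) * Real.pi) = 0 := by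
    exact_mod_cast Real.sin_nat_mul_pi (k + 1)
  rw [intervalIntegral.integral_sub (hintg'.const_mul _) hrhs, intervalIntegral.integral_const_mul, intervalIntegral.integral_const_mul,
    intervalIntegral.integral_sub ((hintg _).const_mul χ) (hintg _), intervalIntegral.integral_const_mul] at hftc
  simp only [mul_neg, Real.sin_neg, Real.sin_nat_mul_pi, hsin, neg_zero, mul_zero, sub_zero,
    zero_div] at hftc
  have hI' : I (k + 1) = fun x => ∫ t in (-Real.pi)..Real.pi,
      Real.cos (((k : ℝ) + 1) * t) / Real.sqrt (x - Real.cos t) := by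
    funext x
    rw [hI]
    push_cast
    rfl
  have hne : χ ^ 2 - 1 ≠ 0 := by nlinarith
  rw [Nat.add_sub_cancel, hI k χ, hI']
  refine (LegendreQ.hasDerivAt_integral ((k : ℝ) + 1) hχ).congr_deriv ?_
  push_cast
  rw [div_mul_eq_mul_div, eq_div_iff (mul_ne_zero two_ne_zero hne)]
  linear_combination 2 * hftc
end

section
/- Let r, r' > 0 with (r, z) ≠ (r', z'), set χ := (r² + (r')² + (z − z')²)/(2 r r') (so χ > 1), and for n ∈ ℤ define Q_n(x) := ∫_{-π}^{π} cos(n t) (8(x − cos t))^{-1/2} dt for x > 1. Then the n-th Fourier mode of the double-layer kernel, d_n := (1/√(32π³)) ∫_{-π}^{π} cos(n t) [ν_r (r cos t − r') + ν_z (z − z')] · (r² + (r')² − 2 r r' cos t + (z − z')²)^{-3/2} dt, satisfies d_n = (1/√(8π³ r r')) [ ν_r ( Q_n'(χ) · ((r')² − r² − (z − z')²)/(2 r (r')²) − Q_n(χ)/(2 r') ) + ν_z Q_n'(χ) · (z' − z)/(r r') ], where Q_n' denotes the derivative of Q_n. -/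
/-!
With `S = √(8(χ − cos t))`, the squared distance is `2rr'(χ − cos t)`, so the distance equals
`√(rr')/2 · S`. Differentiation under the integral sign, legitimate because `x − cos t` stays
bounded away from `0` for `x` near `χ > 1`, gives `Q_n'(χ) = ∫ −4 cos(nt) / S³ dt`
(`hasDerivAt_integral_cos_div_sqrt`). Both sides are then integrals of multiples of
`cos(nt) / S³`, and the integrands agree pointwise because
`S² = 4(r² + r'² + (z−z')²)/(rr') − 8 cos t`, which combines with the `∂χ/∂r'` term to
`4(r cos t − r')/(rr')`.
-/

open MeasureTheory intervalIntegral

lemma hasDerivAt_one_div_sqrt_eight_mul (a c x : ℝ) (h : 0 < x - c) :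
    HasDerivAt (fun x => a / Real.sqrt (8 * (x - c)))
      (-4 * a / Real.sqrt (8 * (x - c)) ^ 3) x := by
  have h8 : 0 < 8 * (x - c) := by linarith
  have hS : 0 < Real.sqrt (8 * (x - c)) := Real.sqrt_pos.2 h8
  have h1 : HasDerivAt (fun x : ℝ => 8 * (x - c)) (8 * 1) x :=
    ((hasDerivAt_id x).sub_const c).const_mul 8
  have h2 := (hasDerivAt_const x a).div (h1.sqrt h8.ne') hS.ne'
  refine h2.congr_deriv ?_
  field_simp
  ring

lemma continuous_div_sqrt_pow (f : ℝ → ℝ) (hf : Continuous f) (x : ℝ) (hx : 1 < x) (k : ℕ) :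
    Continuous (fun t => f t / Real.sqrt (8 * (x - Real.cos t)) ^ k) := by
  refine hf.div (by fun_prop) fun t => ?_
  have : 0 < 8 * (x - Real.cos t) := by linarith [Real.cos_le_one t]
  positivity

/-- Differentiation under the integral sign for `Q_n`. The dominating function is the constant
`4 / √(8(x−1)/2)³`, valid on the ball of radius `(x−1)/2` around `x`. -/
lemma hasDerivAt_integral_cos_div_sqrt (n : ℤ) (x : ℝ) (hx : 1 < x) :
    HasDerivAt
      (fun x => ∫ t in (-Real.pi)..Real.pi, Real.cos (n * t) / Real.sqrt (8 * (x - Real.cos t)))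
      (∫ t in (-Real.pi)..Real.pi, -4 * Real.cos (n * t) / Real.sqrt (8 * (x - Real.cos t)) ^ 3)
      x := by
  have hε : 0 < (x - 1) / 2 := by linarith
  have hball : ∀ y ∈ Metric.ball x ((x - 1) / 2), ∀ t, (x - 1) / 2 ≤ y - Real.cos t := by
    intro y hy t
    rw [Metric.mem_ball, Real.dist_eq, abs_lt] at hy
    linarith [Real.cos_le_one t]
  have hc : ∀ y, 1 < y →
      Continuous (fun t => Real.cos (n * t) / Real.sqrt (8 * (y - Real.cos t))) := fun y hy => by
    simpa using continuous_div_sqrt_pow (fun t => Real.cos (n * t)) (by fun_prop) y hy 1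
  refine (hasDerivAt_integral_of_dominated_loc_of_deriv_le
    (F := fun x t => Real.cos (n * t) / Real.sqrt (8 * (x - Real.cos t)))
    (F' := fun x t => -4 * Real.cos (n * t) / Real.sqrt (8 * (x - Real.cos t)) ^ 3)
    (bound := fun _ => 4 / Real.sqrt (8 * ((x - 1) / 2)) ^ 3)
    (Metric.ball_mem_nhds x hε) ?_ ((hc x hx).intervalIntegrable _ _) ?_ ?_
    intervalIntegrable_const ?_).2
  · filter_upwards [lt_mem_nhds hx] with y hy using (hc y hy).aestronglyMeasurable
  · exact (continuous_div_sqrt_pow (fun t => -4 * Real.cos (n * t)) (by fun_prop) x hx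
      3).aestronglyMeasurable
  · refine Filter.Eventually.of_forall fun t _ y hy => ?_
    have h1 := hball y hy t
    have hS : 0 < Real.sqrt (8 * ((x - 1) / 2)) := Real.sqrt_pos.2 (by linarith)
    rw [Real.norm_eq_abs, abs_div, abs_mul, abs_of_nonneg (a := Real.sqrt _ ^ 3) (by positivity)]
    have h4 : |(-4 : ℝ)| * |Real.cos (n * t)| ≤ 4 := by
      rw [abs_neg, abs_of_pos (by norm_num : (0 : ℝ) < 4)]
      linarith [Real.abs_cos_le_one (n * t)]
    gcongr
  · exact Filter.Eventually.of_forall fun t _ y hy =>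
      hasDerivAt_one_div_sqrt_eight_mul _ _ _ (hε.trans_le (hball y hy t))

/-- Closed form for the Fourier modes of the Laplace double-layer kernel in terms of
the Legendre functions `Q_{n−1/2}` and their derivatives: with
`χ = (r² + r'² + (z−z')²)/(2rr')` and
`Q_n(x) = ∫_{-π}^{π} cos(nt) (8(x − cos t))^{−1/2} dt`, the `n`-th mode
`d_n = (1/√(32π³)) ∫ cos(nt) [ν_r(r cos t − r') + ν_z(z−z')] / (r²+r'²−2rr'cos t+(z−z')²)^{3/2} dt`
equals
`(1/√(8π³rr')) [ν_r (Q_n'(χ) ∂χ/∂r' − Q_n(χ)/(2r')) + ν_z Q_n'(χ) ∂χ/∂z']`. -/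
theorem double_layer_coeff_closed_form
    (r r' z z' νr νz : ℝ) (hr : 0 < r) (hr' : 0 < r')
    (hne : (r, z) ≠ (r', z'))
    (χ : ℝ) (hχ : χ = (r ^ 2 + r' ^ 2 + (z - z') ^ 2) / (2 * r * r'))
    (Q : ℤ → ℝ → ℝ)
    (hQ : ∀ (n : ℤ) (x : ℝ),
      Q n x = ∫ t in (-Real.pi)..Real.pi,
        Real.cos (n * t) / Real.sqrt (8 * (x - Real.cos t)))
    (n : ℤ) :
    (1 / Real.sqrt (32 * Real.pi ^ 3)) *
        ∫ t in (-Real.pi)..Real.pi,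
          Real.cos (n * t) * (νr * (r * Real.cos t - r') + νz * (z - z')) /
            Real.sqrt (r ^ 2 + r' ^ 2 - 2 * r * r' * Real.cos t + (z - z') ^ 2) ^ 3
      = (1 / Real.sqrt (8 * Real.pi ^ 3 * r * r')) *
          (νr * (deriv (Q n) χ * ((r' ^ 2 - r ^ 2 - (z - z') ^ 2) / (2 * r * r' ^ 2))
              - Q n χ / (2 * r'))
            + νz * deriv (Q n) χ * ((z' - z) / (r * r'))) := by
  have hrr : 0 < r * r' := mul_pos hr hr'
  have hx : 1 < χ := by
    rw [hχ, lt_div_iff₀ (by positivity)]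
    have hsq : 0 < (r - r') ^ 2 + (z - z') ^ 2 := by
      by_contra! h
      have h1 : (r - r') ^ 2 = 0 := by nlinarith [sq_nonneg (r - r'), sq_nonneg (z - z')]
      have h2 : (z - z') ^ 2 = 0 := by nlinarith [sq_nonneg (r - r'), sq_nonneg (z - z')]
      rw [sq_eq_zero_iff, sub_eq_zero] at h1 h2
      exact hne (by rw [h1, h2])
    nlinarith
  have hQ' : Q n = fun x => ∫ t in (-Real.pi)..Real.pi,
      Real.cos (n * t) / Real.sqrt (8 * (x - Real.cos t)) := funext (hQ n)
  rw [hQ', (hasDerivAt_integral_cos_div_sqrt n χ hx).deriv]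
  beta_reduce
  have hi1 : IntervalIntegrable (fun t => Real.cos (n * t) / Real.sqrt (8 * (χ - Real.cos t)))
      volume (-Real.pi) Real.pi := by
    refine Continuous.intervalIntegrable ?_ _ _
    simpa using continuous_div_sqrt_pow (fun t => Real.cos (n * t)) (by fun_prop) χ hx 1
  have hi3 : IntervalIntegrable
      (fun t => -4 * Real.cos (n * t) / Real.sqrt (8 * (χ - Real.cos t)) ^ 3)
      volume (-Real.pi) Real.pi :=
    (continuous_div_sqrt_pow (fun t => -4 * Real.cos (n * t)) (by fun_prop) χ hx
      3).intervalIntegrable _ _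
  -- the right-hand side is `(α Q_n'(χ) + β Q_n(χ)) / √(8π³rr')`
  set α := νr * ((r' ^ 2 - r ^ 2 - (z - z') ^ 2) / (2 * r * r' ^ 2))
    + νz * ((z' - z) / (r * r')) with hα
  set β := -νr / (2 * r') with hβ
  have hcomb : ∀ D q : ℝ, νr * (D * ((r' ^ 2 - r ^ 2 - (z - z') ^ 2) / (2 * r * r' ^ 2))
      - q / (2 * r')) + νz * D * ((z' - z) / (r * r')) = α * D + β * q := by
    intro D q
    rw [hα, hβ]
    ring
  rw [hcomb, ← intervalIntegral.integral_const_mul α, ← intervalIntegral.integral_const_mul β,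
    ← intervalIntegral.integral_add (hi3.const_mul α) (hi1.const_mul β),
    ← intervalIntegral.integral_const_mul, ← intervalIntegral.integral_const_mul]
  refine intervalIntegral.integral_congr fun t _ => ?_
  have hd : 0 < χ - Real.cos t := by linarith [Real.cos_le_one t]
  have hS : 0 < Real.sqrt (8 * (χ - Real.cos t)) := Real.sqrt_pos.2 (by linarith)
  have hS2 : Real.sqrt (8 * (χ - Real.cos t)) ^ 2 = 8 * (χ - Real.cos t) :=
    Real.sq_sqrt (by linarith)
  have hp : 0 < Real.sqrt (r * r') := Real.sqrt_pos.2 hrr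
  have hp2 : Real.sqrt (r * r') ^ 2 = r * r' := Real.sq_sqrt hrr.le
  have hP : 0 < Real.sqrt (8 * Real.pi ^ 3) := Real.sqrt_pos.2 (by positivity)
  have e32 : Real.sqrt (32 * Real.pi ^ 3) = 2 * Real.sqrt (8 * Real.pi ^ 3) := by
    rw [show 32 * Real.pi ^ 3 = 2 ^ 2 * (8 * Real.pi ^ 3) by ring,
      Real.sqrt_mul (by norm_num), Real.sqrt_sq (by norm_num)]
  have e8 : Real.sqrt (8 * Real.pi ^ 3 * r * r')
      = Real.sqrt (8 * Real.pi ^ 3) * Real.sqrt (r * r') := by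
    rw [mul_assoc _ r, Real.sqrt_mul (by positivity)]
  have hR : Real.sqrt (r ^ 2 + r' ^ 2 - 2 * r * r' * Real.cos t + (z - z') ^ 2)
      = Real.sqrt (r * r') * Real.sqrt (8 * (χ - Real.cos t)) / 2 := by
    rw [Real.sqrt_eq_iff_mul_self_eq_of_pos (by positivity)]
    have : Real.sqrt (r * r') * Real.sqrt (8 * (χ - Real.cos t)) / 2
        * (Real.sqrt (r * r') * Real.sqrt (8 * (χ - Real.cos t)) / 2)
        = Real.sqrt (r * r') ^ 2 * Real.sqrt (8 * (χ - Real.cos t)) ^ 2 / 4 := by ring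
    rw [this, hp2, hS2, hχ]
    field_simp
    ring
  -- the pointwise identity behind the theorem, after multiplying by `S³`
  have key : -4 * α + β * Real.sqrt (8 * (χ - Real.cos t)) ^ 2
      = 4 * (νr * (r * Real.cos t - r') + νz * (z - z')) / (r * r') := by
    rw [hS2, hα, hβ, hχ]
    field_simp
    ring
  rw [hR, e32, e8]
  generalize Real.sqrt (8 * (χ - Real.cos t)) = S at *
  generalize Real.sqrt (8 * Real.pi ^ 3) = P at *
  generalize Real.sqrt (r * r') = p at *
  have hsum : α * (-4 * Real.cos (n * t) / S ^ 3) + β * (Real.cos (n * t) / S)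
      = Real.cos (n * t) / S ^ 3 * (-4 * α + β * S ^ 2) := by
    field_simp
  rw [hsum, key, ← hp2]
  field_simp
  ring
end
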